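/- arXiv:0803.1477 — 3 statements merged into one kernel-verified Lean document; each statement's English description precedes it below -/
import Mathlib

section
/- Let R be a commutative ring, let (c_k)_{k≥1} be a sequence in R, and for q ∈ R define a_n(q) = Σ_{π ∈ Π_n} q^{|π|} ∏_{B ∈ π} c_{|B|} (with a_0(q) = 1) and, for n ≥ 1, â_n(q) = Σ_{π ∈ Π_n} q^{|π|-1} ∏_{B ∈ π} c_{|B|}. Then for all q1, q2 ∈ R and all n ≥ 1: â_n(q1 + q2) = Σ_{k=1}^{n} binom(n-1, k-1) · â_k(q1) · a_{n-k}(q2). -/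
/-!
Colour the blocks of a partition `π` of `s` with two colours. The union `T` of the blocks of the
first colour is a subset of `s`, and `π` splits into a partition of `T` and one of `s \ T`.
Colouring the block of a fixed `x ∈ s` with the first colour amounts to `x ∈ T`, and leaves
`binom(|π|-1, k-1)` colourings with `k` blocks of the first colour; the binomial theorem for
`(q₁ + q₂) ^ (|π|-1)` then gives the identity, since there are `binom(n-1, k-1)` sets `T ∋ x` of
size `k` in a set of size `n`.
-/

open Finset

/-- `a_n(q) = Σ_{π ∈ Π_n} q^{|π|} ∏_{B ∈ π} c_{|B|}` (so `a_0(q) = 1`). -/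
noncomputable def aPoly {R : Type*} [CommRing R] (c : ℕ → R) (q : R) (n : ℕ) : R :=
  ∑ π : Finpartition (Finset.univ : Finset (Fin n)),
    q ^ π.parts.card * ∏ B ∈ π.parts, c B.card

/-- `â_n(q) = Σ_{π ∈ Π_n} q^{|π|-1} ∏_{B ∈ π} c_{|B|}`. -/
noncomputable def aHatPoly {R : Type*} [CommRing R] (c : ℕ → R) (q : R) (n : ℕ) : R :=
  ∑ π : Finpartition (Finset.univ : Finset (Fin n)),
    q ^ (π.parts.card - 1) * ∏ B ∈ π.parts, c B.card

section PointedSubsets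

variable {ι M R : Type*} [DecidableEq ι] [AddCommMonoid M] [CommSemiring R]

theorem sum_powerset_filter_mem_eq_sum_powerset_erase {s : Finset ι} {i : ι} (hi : i ∈ s)
    (f : Finset ι → M) :
    ∑ t ∈ s.powerset with i ∈ t, f t = ∑ t ∈ (s.erase i).powerset, f (insert i t) := by
  refine sum_nbij' (fun t ↦ t.erase i) (fun t ↦ insert i t) ?_ ?_ ?_ ?_ ?_ <;>
    grind [insert_erase]

theorem sum_powerset_filter_mem_apply_card {s : Finset ι} {i : ι} (hi : i ∈ s) (f : ℕ → M) :
    ∑ t ∈ s.powerset with i ∈ t, f #t = ∑ k ∈ Icc 1 #s, (#s - 1).choose (k - 1) • f k := by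
  calc ∑ t ∈ s.powerset with i ∈ t, f #t
      = ∑ t ∈ (s.erase i).powerset, f #(insert i t) :=
        sum_powerset_filter_mem_eq_sum_powerset_erase hi fun t ↦ f #t
    _ = ∑ t ∈ (s.erase i).powerset, f (#t + 1) :=
        sum_congr rfl fun t ht ↦ by
          rw [card_insert_of_notMem fun h ↦ notMem_erase i s (mem_powerset.1 ht h)]
    _ = ∑ k ∈ range #s, (#s - 1).choose k • f (k + 1) := by
        rw [sum_powerset_apply_card fun k ↦ f (k + 1), card_erase_add_one hi, card_erase_of_mem hi]
    _ = ∑ k ∈ Icc 1 #s, (#s - 1).choose (k - 1) • f k := by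
        rw [← Ico_add_one_right_eq_Icc, sum_Ico_eq_sum_range]
        simp only [Nat.add_sub_cancel, Nat.add_comm 1]

theorem add_pow_pred (x y : R) {n : ℕ} (hn : 1 ≤ n) :
    (x + y) ^ (n - 1) =
      ∑ k ∈ Icc 1 n, ((n - 1).choose (k - 1) : R) * x ^ (k - 1) * y ^ (n - k) := by
  obtain ⟨m, rfl⟩ := Nat.exists_eq_add_of_le' hn
  rw [← Ico_add_one_right_eq_Icc, sum_Ico_eq_sum_range]
  simp only [Nat.add_sub_cancel, Nat.add_comm 1, Nat.add_sub_add_right]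
  rw [add_pow]
  exact sum_congr rfl fun k _ ↦ by ring

end PointedSubsets

section Lattice

variable {α : Type*} {a b c : α}

theorem disjoint_parts_of_disjoint [Lattice α] [OrderBot α] (π : Finpartition a)
    (ρ : Finpartition b) (h : Disjoint a b) : Disjoint π.parts ρ.parts :=
  disjoint_left.2 fun _ hπ hρ ↦ π.ne_bot hπ (disjoint_self.1 (h.mono (π.le hπ) (ρ.le hρ)))

variable [DecidableEq α]

/-- The union of finpartitions of two disjoint elements `a` and `b`, as a finpartition of their
supremum. It glues a partition of a set from partitions of a subset and of its complement. -/
@[simps]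
def finpartitionDisjUnion [Lattice α] [OrderBot α] [IsModularLattice α] (π : Finpartition a)
    (ρ : Finpartition b) (hab : Disjoint a b) (hc : a ⊔ b = c) : Finpartition c where
  parts := π.parts ∪ ρ.parts
  supIndep := π.supIndep.union ρ.supIndep (by rwa [π.sup_parts, ρ.sup_parts])
  sup_parts := by rw [sup_union, π.sup_parts, ρ.sup_parts, hc]
  bot_notMem := by simp only [mem_union, π.bot_notMem, ρ.bot_notMem, or_self, not_false_eq_true]

theorem sup_parts_sdiff_eq_sdiff_sup [GeneralizedBooleanAlgebra α] (π : Finpartition a)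
    {S : Finset α} (hS : S ⊆ π.parts) : (π.parts \ S).sup id = a \ S.sup id := by
  have hdisj : Disjoint ((π.parts \ S).sup id) (S.sup id) :=
    π.supIndep.disjoint_sup_sup sdiff_subset hS sdiff_disjoint
  have hsup : (π.parts \ S).sup id ⊔ S.sup id = a := by
    rw [← sup_union, sdiff_union_of_subset hS, π.sup_parts]
  calc (π.parts \ S).sup id = ((π.parts \ S).sup id ⊔ S.sup id) \ S.sup id := by
        rw [sup_sdiff_right_self, hdisj.sdiff_eq_left]
    _ = a \ S.sup id := by rw [hsup]

end Lattice

section Dissection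

variable {α M : Type*} [DecidableEq α] [AddCommMonoid M] {s : Finset α}

theorem sum_finpartition_sum_powerset_parts (F : Finset (Finset α) → Finset (Finset α) → M) :
    ∑ π : Finpartition s, ∑ S ∈ π.parts.powerset, F S (π.parts \ S) =
      ∑ T ∈ s.powerset, ∑ ρ : Finpartition T, ∑ σ : Finpartition (s \ T), F ρ.parts σ.parts := by
  simp_rw [← Fintype.sum_prod_type']
  rw [sum_sigma', sum_sigma']
  symm
  refine sum_bij (fun p hp ↦ ⟨finpartitionDisjUnion p.2.1 p.2.2 disjoint_sdiff
    (union_sdiff_of_subset (mem_powerset.1 (mem_sigma.1 hp).1)), p.2.1.parts⟩) ?_ ?_ ?_ ?_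
  · exact fun p _ ↦ mem_sigma.2 ⟨mem_univ _, mem_powerset.2 subset_union_left⟩
  · rintro ⟨T, ρ, σ⟩ _ ⟨T', ρ', σ'⟩ _ h
    simp only [Sigma.mk.injEq, heq_eq_eq, Finpartition.ext_iff, finpartitionDisjUnion_parts] at h
    obtain ⟨hunion, hρ⟩ := h
    obtain rfl : T = T' := by rw [← ρ.sup_parts, hρ, ρ'.sup_parts]
    obtain rfl : ρ = ρ' := Finpartition.ext hρ
    have hσ : σ.parts = σ'.parts := by
      rw [← union_sdiff_cancel_left (disjoint_parts_of_disjoint ρ σ disjoint_sdiff), hunion,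
        union_sdiff_cancel_left (disjoint_parts_of_disjoint ρ σ' disjoint_sdiff)]
    rw [Finpartition.ext hσ]
  · rintro ⟨π, S⟩ hS
    replace hS : S ⊆ π.parts := by simpa using hS
    refine ⟨⟨S.sup id, π.ofSubset hS rfl,
      π.ofSubset sdiff_subset (sup_parts_sdiff_eq_sdiff_sup π hS)⟩, ?_, ?_⟩
    · simpa using (sup_mono hS).trans_eq π.sup_parts
    · simp [Finpartition.ext_iff, union_sdiff_of_subset hS]
  · rintro ⟨T, ρ, σ⟩ _
    simp only [finpartitionDisjUnion_parts]
    rw [union_sdiff_cancel_left (disjoint_parts_of_disjoint ρ σ disjoint_sdiff)]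

theorem mem_sup_iff_part_mem (π : Finpartition s) {S : Finset (Finset α)} (hS : S ⊆ π.parts)
    {x : α} (hx : x ∈ s) : x ∈ S.sup id ↔ π.part x ∈ S := by
  rw [mem_sup]
  constructor
  · rintro ⟨B, hB, hxB⟩
    rwa [π.part_eq_of_mem (hS hB) hxB]
  · exact fun h ↦ ⟨π.part x, h, π.mem_part_self.2 hx⟩

theorem sum_finpartition_sum_powerset_parts_filter_part_mem {x : α} (hx : x ∈ s)
    (F : Finset (Finset α) → Finset (Finset α) → M) :
    ∑ π : Finpartition s, ∑ S ∈ π.parts.powerset with π.part x ∈ S, F S (π.parts \ S) =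
      ∑ T ∈ s.powerset with x ∈ T,
        ∑ ρ : Finpartition T, ∑ σ : Finpartition (s \ T), F ρ.parts σ.parts := by
  have h := sum_finpartition_sum_powerset_parts (s := s)
    fun S S' ↦ if x ∈ S.sup id then F S S' else 0
  simp only [Finpartition.sup_parts] at h
  simp only [sum_filter]
  convert h using 2 with π _ T _
  · exact sum_congr rfl fun S hS ↦
      if_congr (mem_sup_iff_part_mem π (mem_powerset.1 hS) hx).symm rfl rfl
  · split_ifs <;> simp

end Dissection

section Transport

variable {α β : Type*} [DecidableEq β] (f : α ↪ β) {s : Finset α}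

theorem exists_map_mapEmbedding_eq_parts (ρ : Finpartition (s.map f)) :
    ∃ P : Finset (Finset α), P.map (mapEmbedding f).toEmbedding = ρ.parts := by
  refine ⟨ρ.parts.preimage (mapEmbedding f) (mapEmbedding f).injective.injOn, ?_⟩
  ext B
  simp only [mem_map, mem_preimage]
  constructor
  · rintro ⟨A, hA, rfl⟩
    exact hA
  · intro hB
    obtain ⟨A, -, rfl⟩ := subset_map_iff.1 (ρ.le hB)
    exact ⟨A, hB, rfl⟩

variable [DecidableEq α]

/-- The image of a finpartition of `s` under an injection `f`, as a finpartition of `s.map f`. It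
serves to compare the partitions of sets living in different types. -/
@[simps]
def finpartitionMap (π : Finpartition s) : Finpartition (s.map f) where
  parts := π.parts.map (mapEmbedding f).toEmbedding
  supIndep := by
    rw [supIndep_map, supIndep_iff_pairwiseDisjoint]
    exact π.pairwiseDisjoint_apply (fun _ _ ↦ map_inter _ _) (map_empty f)
  sup_parts := by
    rw [sup_map]
    exact π.sup_parts_apply (fun _ _ ↦ map_union _ _) (map_empty f)
  bot_notMem := by simp

theorem finpartitionMap_injective :
    Function.Injective (finpartitionMap f : Finpartition s → Finpartition (s.map f)) :=
  fun _ _ h ↦ Finpartition.ext (map_injective _ (congrArg Finpartition.parts h))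

theorem finpartitionMap_surjective :
    Function.Surjective (finpartitionMap f : Finpartition s → Finpartition (s.map f)) := by
  intro ρ
  obtain ⟨P, hP⟩ := exists_map_mapEmbedding_eq_parts f ρ
  have hmem {A : Finset α} (hA : A ∈ P) : A.map f ∈ ρ.parts :=
    hP ▸ mem_map_of_mem (mapEmbedding f).toEmbedding hA
  have hdisj : (P : Set (Finset α)).PairwiseDisjoint id := by
    intro A hA B hB hAB
    exact (disjoint_map f).1 (ρ.disjoint (hmem hA) (hmem hB) ((map_injective f).ne hAB))
  have hsup : P.sup id = s := by
    apply map_injective f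
    rw [← ρ.sup_parts, ← hP, sup_map]
    exact apply_sup_eq_sup_comp (Finset.map f) (fun _ _ ↦ map_union _ _) (map_empty f)
  have hbot : ⊥ ∉ P := fun h ↦ ρ.bot_notMem (hmem h)
  exact ⟨⟨P, supIndep_iff_pairwiseDisjoint.2 hdisj, hsup, hbot⟩, Finpartition.ext hP⟩

end Transport

section PartitionSum

variable {α β R : Type*} [DecidableEq α] [DecidableEq β] [CommSemiring R]

/-- The sum over the partitions of `s` of the product of a weight `w` of the number of blocks and
of the block weights `c |B|`. The sums `a_n(q)` and `â_n(q)` are the cases `w m = q ^ m` and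
`w m = q ^ (m - 1)` for a set `s` of size `n`. -/
def partitionSum (w c : ℕ → R) (s : Finset α) : R :=
  ∑ π : Finpartition s, w #π.parts * ∏ B ∈ π.parts, c #B

theorem partitionSum_map (w c : ℕ → R) (f : α ↪ β) (s : Finset α) :
    partitionSum w c (s.map f) = partitionSum w c s :=
  (Fintype.sum_bijective _ ⟨finpartitionMap_injective f, finpartitionMap_surjective f⟩ _ _
    fun π ↦ by simp).symm

theorem partitionSum_eq_partitionSum_univ_fin (w c : ℕ → R) (s : Finset α) :
    partitionSum w c s = partitionSum w c (univ : Finset (Fin #s)) := by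
  let f : Fin #s ↪ α := s.equivFin.symm.toEmbedding.trans (Function.Embedding.subtype _)
  have hf : univ.map f = s := by
    rw [← map_map, map_univ_equiv, univ_eq_attach, attach_map_val]
  rw [← partitionSum_map w c f, hf]

theorem partitionSum_congr {w w' : ℕ → R} (c : ℕ → R) {s : Finset α} (hs : s.Nonempty)
    (h : ∀ m, 1 ≤ m → w m = w' m) : partitionSum w c s = partitionSum w' c s :=
  sum_congr rfl fun π _ ↦ by
    rw [h _ (card_pos.2 (π.parts_nonempty hs.ne_empty))]

theorem sum_partitionSum_mul_partitionSum_sdiff (u v c : ℕ → R) {s : Finset α} {x : α}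
    (hx : x ∈ s) :
    ∑ T ∈ s.powerset with x ∈ T, partitionSum u c T * partitionSum v c (s \ T) =
      partitionSum (fun m ↦ ∑ k ∈ Icc 1 m, ((m - 1).choose (k - 1) : R) * u k * v (m - k)) c s := by
  simp only [partitionSum, sum_mul_sum]
  rw [← sum_finpartition_sum_powerset_parts_filter_part_mem hx fun S S' ↦
    (u #S * ∏ B ∈ S, c #B) * (v #S' * ∏ B ∈ S', c #B)]
  refine sum_congr rfl fun π _ ↦ ?_
  calc ∑ S ∈ π.parts.powerset with π.part x ∈ S,
        (u #S * ∏ B ∈ S, c #B) * (v #(π.parts \ S) * ∏ B ∈ π.parts \ S, c #B)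
      = ∑ S ∈ π.parts.powerset with π.part x ∈ S,
          u #S * v (#π.parts - #S) * ∏ B ∈ π.parts, c #B := by
        refine sum_congr rfl fun S hS ↦ ?_
        have hSπ : S ⊆ π.parts := mem_powerset.1 (mem_filter.1 hS).1
        rw [← card_sdiff_of_subset hSπ, ← prod_sdiff hSπ]
        ring
    _ = (∑ k ∈ Icc 1 #π.parts, ((#π.parts - 1).choose (k - 1) : R) * u k * v (#π.parts - k)) *
          ∏ B ∈ π.parts, c #B := by
        rw [← sum_mul, sum_powerset_filter_mem_apply_card (π.part_mem.2 hx)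
          fun k ↦ u k * v (#π.parts - k)]
        simp only [nsmul_eq_mul, mul_assoc]

end PartitionSum

theorem stmt1_general {R : Type*} [CommSemiring R] (c : ℕ → R) (q₁ q₂ : R) (n : ℕ) (hn : 1 ≤ n) :
    partitionSum (fun m ↦ (q₁ + q₂) ^ (m - 1)) c (univ : Finset (Fin n)) =
      ∑ k ∈ Icc 1 n, ((n - 1).choose (k - 1) : R) *
        partitionSum (fun m ↦ q₁ ^ (m - 1)) c (univ : Finset (Fin k)) *
        partitionSum (fun m ↦ q₂ ^ m) c (univ : Finset (Fin (n - k))) := by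
  let x : Fin n := ⟨0, hn⟩
  let A (k : ℕ) : R := partitionSum (fun m ↦ q₁ ^ (m - 1)) c (univ : Finset (Fin k))
  let B (k : ℕ) : R := partitionSum (fun m ↦ q₂ ^ m) c (univ : Finset (Fin k))
  calc partitionSum (fun m ↦ (q₁ + q₂) ^ (m - 1)) c (univ : Finset (Fin n))
      = ∑ T ∈ univ.powerset with x ∈ T,
          partitionSum (fun m ↦ q₁ ^ (m - 1)) c T * partitionSum (fun m ↦ q₂ ^ m) c (univ \ T) := by
        rw [sum_partitionSum_mul_partitionSum_sdiff _ _ c (mem_univ x)]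
        exact partitionSum_congr c ⟨x, mem_univ x⟩ fun _ ↦ add_pow_pred q₁ q₂
    _ = ∑ T ∈ univ.powerset with x ∈ T, A #T * B (n - #T) := by
        refine sum_congr rfl fun T _ ↦ ?_
        rw [partitionSum_eq_partitionSum_univ_fin _ c T,
          partitionSum_eq_partitionSum_univ_fin _ c (univ \ T),
          card_sdiff_of_subset (subset_univ T), card_fin]
    _ = ∑ k ∈ Icc 1 n, ((n - 1).choose (k - 1) : R) * A k * B (n - k) := by
        rw [sum_powerset_filter_mem_apply_card (mem_univ x) fun k ↦ A k * B (n - k), card_fin]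
        simp only [nsmul_eq_mul, mul_assoc]

theorem stmt1 {R : Type*} [CommRing R] (c : ℕ → R) (q1 q2 : R) (n : ℕ) (hn : 1 ≤ n) :
    aHatPoly c (q1 + q2) n
      = ∑ k ∈ Finset.Icc 1 n,
          ((n - 1).choose (k - 1) : R) * aHatPoly c q1 k * aPoly c q2 (n - k) := by
  exact stmt1_general c q1 q2 n hn
end

section
/- Let G = (V,E) be a finite simple graph with |V| ≥ 2, let R be a commutative ring, let v : E → R be edge weights, let q ∈ R, and fix a vertex j ∈ V. Then Ẑ_G(q, v) = Σ_{π ∈ Π(V∖{j})} ∏_{B ∈ π} [ q - 1 + ∏_{e ∈ E(B,j)} (1 + v_e) ] · C_{G[B]}(v), where the sum runs over all partitions π of V∖{j} into nonempty blocks and E(B,j) denotes the set of edges of G with one endpoint in the block B and the other endpoint equal to j. -/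
open Finset SimpleGraph

/-- The number of connected components of the graph on the vertex set `W`
with edge set `A` (isolated vertices count as components). -/
noncomputable def kcomp {V : Type*} [Fintype V] [DecidableEq V]
    (W : Finset V) (A : Finset (Sym2 V)) : ℕ :=
  Nat.card ((SimpleGraph.fromEdgeSet (A : Set (Sym2 V))).induce (W : Set V)).ConnectedComponent

/-- The edges of `G` with both endpoints in `W`, i.e. the edges of the
induced subgraph `G[W]`. -/
def edgesWithin {V : Type*} [Fintype V] [DecidableEq V]
    (G : SimpleGraph V) [DecidableRel G.Adj] (W : Finset V) : Finset (Sym2 V) :=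
  G.edgeFinset.filter (fun e => ∀ x ∈ e, x ∈ W)

/-- The multivariate Tutte polynomial of the induced subgraph `G[W]`:
`Z_{G[W]}(q,v) = Σ_{A ⊆ E(G[W])} q^{k(A)} ∏_{e ∈ A} v_e`. -/
noncomputable def Zmv {V : Type*} [Fintype V] [DecidableEq V] {R : Type*} [CommRing R]
    (G : SimpleGraph V) [DecidableRel G.Adj] (W : Finset V) (q : R) (v : Sym2 V → R) : R :=
  ∑ A ∈ (edgesWithin G W).powerset, q ^ kcomp W A * ∏ e ∈ A, v e

/-- `Ẑ_{G[W]}(q,v) = Σ_{A ⊆ E(G[W])} q^{k(A)-1} ∏_{e ∈ A} v_e`. -/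
noncomputable def ZhatMv {V : Type*} [Fintype V] [DecidableEq V] {R : Type*} [CommRing R]
    (G : SimpleGraph V) [DecidableRel G.Adj] (W : Finset V) (q : R) (v : Sym2 V → R) : R :=
  ∑ A ∈ (edgesWithin G W).powerset, q ^ (kcomp W A - 1) * ∏ e ∈ A, v e

/-- The generating polynomial of connected spanning subgraphs of `G[W]`:
`C_{G[W]}(v) = Σ_{A ⊆ E(G[W]) : k(A)=1} ∏_{e ∈ A} v_e`. -/
noncomputable def Cmv {V : Type*} [Fintype V] [DecidableEq V] {R : Type*} [CommRing R]
    (G : SimpleGraph V) [DecidableRel G.Adj] (W : Finset V) (v : Sym2 V → R) : R :=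
  ∑ A ∈ (edgesWithin G W).powerset.filter (fun A => kcomp W A = 1), ∏ e ∈ A, v e

/-- The edges of `G` with one endpoint in `W` and the other endpoint equal to `j`. -/
def edgesTo {V : Type*} [Fintype V] [DecidableEq V]
    (G : SimpleGraph V) [DecidableRel G.Adj] (W : Finset V) (j : V) : Finset (Sym2 V) :=
  G.edgeFinset.filter (fun e => ∃ x ∈ W, e = s(x, j))

/-!
Deleting `j` from `(V, A)` leaves a graph whose components partition `V ∖ {j}`; group the edge sets
`A` by this partition `π`. An `A` with partition `π` amounts to independent choices, one for each
block `B` of `π`, of a connected spanning edge set of `G[B]` and an arbitrary subset of `E(B, j)`.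
Apart from the component of `j`, the components of `(V, A)` are the blocks whose subset of `E(B, j)`
is empty, so `k(A) - 1` counts these. Hence the sum of the weights factors over the blocks, and the
factor of `B` is `C_{G[B]}` times the sum over subsets of `E(B, j)`, in which the empty set is
weighted by `q` instead of `1`.
-/

section PowersetSums

variable {α ι R : Type*} [DecidableEq α] [CommSemiring R]

theorem sum_powerset_union_mul {s t : Finset α} (hst : Disjoint s t) (f g : Finset α → R) :
    ∑ A ∈ (s ∪ t).powerset, f (A ∩ s) * g (A ∩ t)
      = (∑ A ∈ s.powerset, f A) * ∑ A ∈ t.powerset, g A := by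
  rw [sum_mul_sum, ← sum_product']
  have hst' : ∀ a ∈ s, a ∉ t := fun _ ha ↦ Finset.disjoint_left.mp hst ha
  refine sum_bij' (fun A _ ↦ (A ∩ s, A ∩ t)) (fun p _ ↦ p.1 ∪ p.2) ?_ ?_ ?_ ?_ fun _ _ ↦ rfl
  · simp
  · simp only [mem_product, mem_powerset]
    exact fun p hp ↦ union_subset_union hp.1 hp.2
  · simp only [mem_powerset, ← inter_union_distrib_left, inter_eq_left]
    exact fun _ ↦ id
  · simp only [mem_product, mem_powerset]
    rintro ⟨A, B⟩ ⟨hA, hB⟩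
    ext a <;> grind

theorem sum_powerset_biUnion_prod {s : Finset ι} {t : ι → Finset α}
    (ht : (s : Set ι).PairwiseDisjoint t) (f : ι → Finset α → R) :
    ∑ A ∈ (s.biUnion t).powerset, ∏ i ∈ s, f i (A ∩ t i)
      = ∏ i ∈ s, ∑ A ∈ (t i).powerset, f i A := by
  classical
  induction s using Finset.induction_on with
  | empty => simp
  | insert i s hi ih =>
    rw [coe_insert, Set.pairwiseDisjoint_insert_of_notMem (mod_cast hi)] at ht
    have hdisj : Disjoint (t i) (s.biUnion t) := (disjoint_biUnion_right _ _ _).mpr ht.2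
    rw [biUnion_insert, prod_insert hi, ← ih ht.1, ← sum_powerset_union_mul hdisj]
    refine sum_congr rfl fun A _ ↦ ?_
    rw [prod_insert hi]
    congr 1
    refine prod_congr rfl fun k hk ↦ ?_
    rw [inter_assoc, inter_eq_right.mpr (subset_biUnion_of_mem t hk)]

theorem sum_powerset_biUnion_filter_prod {s : Finset ι} {t : ι → Finset α}
    (ht : (s : Set ι).PairwiseDisjoint t) (p : ι → Finset α → Prop) [∀ i, DecidablePred (p i)]
    (f : ι → Finset α → R) :
    ∑ A ∈ (s.biUnion t).powerset with ∀ i ∈ s, p i (A ∩ t i), ∏ i ∈ s, f i (A ∩ t i)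
      = ∏ i ∈ s, ∑ A ∈ (t i).powerset with p i A, f i A := by
  simp only [sum_filter, ← prod_ite_zero]
  exact sum_powerset_biUnion_prod ht fun i A ↦ if p i A then f i A else 0

theorem sum_powerset_ite_empty_mul_prod {R : Type*} [CommRing R] (s : Finset α) (q : R)
    (v : α → R) :
    ∑ A ∈ s.powerset, (if A = ∅ then q else 1) * ∏ a ∈ A, v a
      = q - 1 + ∏ a ∈ s, (1 + v a) := by
  have hsplit (A : Finset α) : (if A = ∅ then q else 1) * ∏ a ∈ A, v a
      = (if A = ∅ then q - 1 else 0) + ∏ a ∈ A, v a := by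
    split_ifs with hA <;> simp [hA]
  simp only [hsplit, sum_add_distrib, sum_ite_eq', empty_mem_powerset, if_true, prod_one_add]

end PowersetSums

theorem finpartition_eq_of_parts_subset {α : Type*} [DecidableEq α] {s : Finset α}
    {π ρ : Finpartition s} (h : π.parts ⊆ ρ.parts) : π = ρ := by
  refine le_antisymm (fun B hB ↦ ⟨B, h hB, le_rfl⟩) fun C hC ↦ ?_
  obtain ⟨x, hx⟩ := ρ.nonempty_of_mem_parts hC
  obtain ⟨B, hB, hxB⟩ := π.exists_mem (ρ.subset hC hx)
  exact ⟨B, hB, (ρ.eq_of_mem_parts hC (h hB) hx hxB).le⟩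

theorem notMem_of_mem_parts_erase {α : Type*} [DecidableEq α] {s : Finset α} {a : α}
    {π : Finpartition (s.erase a)} {B : Finset α} (hB : B ∈ π.parts) : a ∉ B :=
  fun h ↦ notMem_erase a s (π.subset hB h)

section Components

variable {V : Type*} {H : SimpleGraph V}

theorem exists_supp_eq_iff {S : Set V} :
    (∃ C : H.ConnectedComponent, C.supp = S) ↔
      (H.induce S).Connected ∧ ∀ x ∈ S, ∀ y, H.Adj x y → y ∈ S := by
  constructor
  · rintro ⟨C, rfl⟩
    exact ⟨C.connected_toSimpleGraph, fun x hx y ↦ C.mem_supp_of_adj_mem_supp hx⟩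
  · rintro ⟨hconn, hclosed⟩
    obtain ⟨x, hx⟩ := hconn.nonempty
    refine ⟨H.connectedComponentMk x, Set.Subset.antisymm (fun y hy ↦ ?_) fun y hy ↦ ?_⟩
    · obtain ⟨p⟩ := (ConnectedComponent.exact hy).symm
      clear hy
      induction p with
      | nil => exact hx
      | cons hadj _ ih => exact ih (hclosed _ hx _ hadj)
    · exact ConnectedComponent.sound <|
        (hconn.preconnected ⟨y, hy⟩ ⟨x, hx⟩).map (Embedding.induce S).toHom

variable [Fintype V] [DecidableEq V] {j : V}

open Classical in
/-- The partition of `V ∖ {j}` into the vertex sets of the connected components of `H - j`. Here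
`H - j` is encoded as a graph on all of `V` in which `j` is isolated. -/
noncomputable def awayPartition (H : SimpleGraph V) (j : V) :
    Finpartition ((univ : Finset V).erase j) :=
  .ofSetSetoid (H.deleteIncidenceSet j).reachableSetoid _

theorem mem_awayPartition_parts_iff_supp {B : Finset V} :
    B ∈ (awayPartition H j).parts ↔
      j ∉ B ∧ ∃ C : (H.deleteIncidenceSet j).ConnectedComponent, C.supp = B := by
  classical
  have hiso {x : V} (hx : x ≠ j) : ¬(H.deleteIncidenceSet j).Reachable j x := fun h ↦
    (H.support_deleteIncidenceSet_subset j (mem_support_of_reachable hx.symm h)).2 rfl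
  have hrel (x y : V) : (H.deleteIncidenceSet j).reachableSetoid x y ↔
      (H.deleteIncidenceSet j).Reachable x y := .rfl
  simp only [awayPartition, Finpartition.ofSetSetoid_parts, mem_image, mem_erase, mem_univ,
    and_true]
  constructor
  · rintro ⟨x, hx, rfl⟩
    refine ⟨by simp, (H.deleteIncidenceSet j).connectedComponentMk x, ?_⟩
    ext y
    have hy : (H.deleteIncidenceSet j).Reachable x y → y ≠ j := by
      rintro h rfl
      exact hiso hx h.symm
    simp only [mem_coe, mem_filter, mem_erase, mem_univ, and_true, hrel,
      ConnectedComponent.mem_supp_iff, ConnectedComponent.eq, reachable_comm (u := y)]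
    exact ⟨fun h ↦ ⟨hy h, h⟩, And.right⟩
  · rintro ⟨hj, C, hC⟩
    obtain ⟨x, hx⟩ := C.nonempty_supp
    have hmem (y : V) : y ∈ B ↔ (H.deleteIncidenceSet j).Reachable x y := by
      rw [← mem_coe, ← hC, reachable_comm, ← ConnectedComponent.eq, ConnectedComponent.mem_supp_iff,
        (C.mem_supp_iff x).mp hx]
    refine ⟨x, ne_of_mem_of_not_mem ((hmem x).mpr .rfl) hj, ?_⟩
    ext y
    have hy : y ∈ B → y ≠ j := fun h ↦ ne_of_mem_of_not_mem h hj
    simp only [mem_filter, mem_erase, mem_univ, and_true, hrel, ← hmem]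
    exact ⟨And.right, fun h ↦ ⟨hy h, h⟩⟩

theorem mem_awayPartition_parts_iff {B : Finset V} :
    B ∈ (awayPartition H j).parts ↔ j ∉ B ∧ (H.induce (B : Set V)).Connected ∧
      ∀ x ∈ B, ∀ y ≠ j, H.Adj x y → y ∈ B := by
  rw [mem_awayPartition_parts_iff_supp, exists_supp_eq_iff]
  refine and_congr_right fun hj ↦ ?_
  rw [induce_deleteIncidenceSet_of_notMem _ (by simpa using hj)]
  refine and_congr_right fun _ ↦ forall₂_congr fun x hx ↦ forall_congr' fun y ↦ ?_
  have hxj : x ≠ j := ne_of_mem_of_not_mem hx (by simpa using hj)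
  simp only [deleteIncidenceSet_adj, mem_coe]
  tauto

theorem awayPartition_eq_iff {π : Finpartition ((univ : Finset V).erase j)} :
    awayPartition H j = π ↔
      (∀ x ≠ j, ∀ y ≠ j, H.Adj x y → ∃ B ∈ π.parts, x ∈ B ∧ y ∈ B) ∧
        ∀ B ∈ π.parts, (H.induce (B : Set V)).Connected := by
  constructor
  · rintro rfl
    refine ⟨fun x hx y hy hxy ↦ ?_, fun B hB ↦ (mem_awayPartition_parts_iff.mp hB).2.1⟩
    obtain ⟨B, hB, hxB⟩ := (awayPartition H j).exists_mem (mem_erase.mpr ⟨hx, mem_univ x⟩)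
    exact ⟨B, hB, hxB, (mem_awayPartition_parts_iff.mp hB).2.2 x hxB y hy hxy⟩
  · rintro ⟨hadj, hconn⟩
    refine (finpartition_eq_of_parts_subset fun B hB ↦ ?_).symm
    have hj : j ∉ B := notMem_of_mem_parts_erase hB
    refine mem_awayPartition_parts_iff.mpr ⟨hj, hconn B hB, fun x hx y hy hxy ↦ ?_⟩
    obtain ⟨C, hC, hxC, hyC⟩ := hadj x (ne_of_mem_of_not_mem hx hj) y hy hxy
    rwa [π.eq_of_mem_parts hB hC hx hxC]

open Classical in
theorem card_connectedComponent_eq_card_filter_awayPartition (H : SimpleGraph V) (j : V) :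
    Nat.card H.ConnectedComponent
      = #{B ∈ (awayPartition H j).parts | ∀ x ∈ B, ¬H.Adj x j} + 1 := by
  have himage : {B ∈ (awayPartition H j).parts | ∀ x ∈ B, ¬H.Adj x j}
      = ((univ : Finset H.ConnectedComponent).erase (H.connectedComponentMk j)).image
          fun C ↦ C.supp.toFinset := by
    ext B
    calc B ∈ {B ∈ (awayPartition H j).parts | ∀ x ∈ B, ¬H.Adj x j}
        ↔ j ∉ B ∧ (H.induce (B : Set V)).Connected ∧ ∀ x ∈ B, ∀ y, H.Adj x y → y ∈ B := by
          rw [mem_filter, mem_awayPartition_parts_iff]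
          grind
      _ ↔ j ∉ B ∧ ∃ C : H.ConnectedComponent, C.supp = B := by
          rw [exists_supp_eq_iff]
          rfl
      _ ↔ B ∈ (univ.erase (H.connectedComponentMk j)).image fun C ↦ C.supp.toFinset := by
          simp only [mem_image, mem_erase, mem_univ, and_true, ← coe_inj, Set.coe_toFinset]
          constructor
          · rintro ⟨hj, C, hC⟩
            refine ⟨C, ?_, hC⟩
            rintro rfl
            exact hj (mem_coe.mp (hC ▸ ConnectedComponent.connectedComponentMk_mem))
          · rintro ⟨C, hC, hCB⟩
            refine ⟨fun hj ↦ hC ?_, C, hCB⟩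
            rw [← mem_coe, ← hCB] at hj
            exact hj.symm
  have hinj : Function.Injective fun C : H.ConnectedComponent ↦ C.supp.toFinset :=
    fun C D h ↦ ConnectedComponent.supp_injective (Set.toFinset_inj.mp h)
  rw [himage, card_image_of_injective _ hinj, card_erase_add_one (mem_univ _), card_univ,
    Nat.card_eq_fintype_card]

end Components

section EdgeSets

variable {V : Type*} [Fintype V] [DecidableEq V] {G : SimpleGraph V} [DecidableRel G.Adj]
  {A : Finset (Sym2 V)} {B W : Finset V} {j x y : V}

theorem mk_mem_edgesWithin_iff : s(x, y) ∈ edgesWithin G W ↔ G.Adj x y ∧ x ∈ W ∧ y ∈ W := by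
  simp [edgesWithin]

theorem mk_mem_edgesTo_iff : s(x, j) ∈ edgesTo G W j ↔ G.Adj x j ∧ x ∈ W := by
  simp only [edgesTo, mem_filter, mem_edgeFinset, mem_edgeSet, Sym2.congr_left, exists_eq_right']

theorem edgesWithin_univ : edgesWithin G univ = G.edgeFinset := by
  simp [edgesWithin]

theorem edgesWithin_insert :
    edgesWithin G (insert j B) = edgesWithin G B ∪ edgesTo G B j := by
  ext e
  induction e with | _ x y
  have := G.ne_of_adj (a := x) (b := y)
  simp only [edgesTo, mem_union, mem_filter, mk_mem_edgesWithin_iff, mem_edgeFinset, mem_edgeSet,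
    mem_insert, Sym2.eq_iff]
  grind

theorem disjoint_edgesWithin_edgesTo (hj : j ∉ B) :
    Disjoint (edgesWithin G B) (edgesTo G B j) := by
  rw [Finset.disjoint_left]
  intro e he he'
  obtain ⟨-, x, -, rfl⟩ := mem_filter.mp he'
  exact hj (mk_mem_edgesWithin_iff.mp he).2.2

theorem pairwiseDisjoint_edgesWithin_insert {s : Finset V} (π : Finpartition s) (j : V) :
    (π.parts : Set (Finset V)).PairwiseDisjoint fun B ↦ edgesWithin G (insert j B) := by
  intro B hB C hC hBC
  refine Finset.disjoint_left.mpr fun e heB heC ↦ ?_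
  induction e with | _ x y
  obtain ⟨hxy, hxB, hyB⟩ := mk_mem_edgesWithin_iff.mp heB
  obtain ⟨-, hxC, hyC⟩ := mk_mem_edgesWithin_iff.mp heC
  have hdisj : ∀ z ∈ B, z ∉ C := fun z hzB hzC ↦ hBC (π.eq_of_mem_parts hB hC hzB hzC)
  have hne : x ≠ y := hxy.ne
  grind

theorem kcomp_eq_one_iff :
    kcomp W A = 1 ↔ ((fromEdgeSet (A : Set (Sym2 V))).induce (W : Set V)).Connected := by
  rw [kcomp, Nat.card_eq_one_iff_unique]
  constructor
  · rintro ⟨_, ⟨C⟩⟩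
    obtain ⟨x, -⟩ := C.nonempty_supp
    exact connected_iff _ |>.mpr
      ⟨fun _ _ ↦ ConnectedComponent.exact (Subsingleton.elim _ _), ⟨x⟩⟩
  · intro h
    exact ⟨h.preconnected.subsingleton_connectedComponent, h.nonempty.map (connectedComponentMk _)⟩

theorem kcomp_univ :
    kcomp univ A = Nat.card (fromEdgeSet (A : Set (Sym2 V))).ConnectedComponent := by
  rw [kcomp, coe_univ]
  exact Nat.card_congr (induceUnivIso _).connectedComponentEquiv

theorem kcomp_inter_edgesWithin (hA : A ⊆ G.edgeFinset) :
    kcomp W (A ∩ edgesWithin G W) = kcomp W A := by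
  have hinduce : (fromEdgeSet (A ∩ edgesWithin G W : Set (Sym2 V))).induce (W : Set V)
      = (fromEdgeSet (A : Set (Sym2 V))).induce (W : Set V) := by
    ext ⟨x, hx⟩ ⟨y, hy⟩
    have hxy : s(x, y) ∈ A → G.Adj x y := fun h ↦ mem_edgeFinset.mp (hA h)
    simp only [fromEdgeSet_inter, comap_adj, Function.Embedding.subtype_apply, inf_adj,
      fromEdgeSet_adj, mem_coe, mk_mem_edgesWithin_iff, mem_coe.mp hx, mem_coe.mp hy, and_true]
    tauto
  rw [kcomp, kcomp, coe_inter, hinduce]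

theorem inter_edgesTo_eq_empty_iff (hA : A ⊆ G.edgeFinset) :
    A ∩ edgesTo G B j = ∅ ↔ ∀ x ∈ B, ¬(fromEdgeSet (A : Set (Sym2 V))).Adj x j := by
  rw [eq_empty_iff_forall_notMem]
  constructor
  · intro h x hx hxj
    have hxA : s(x, j) ∈ A := hxj.1
    exact h s(x, j) (mem_inter.mpr ⟨hxA, mk_mem_edgesTo_iff.mpr ⟨mem_edgeFinset.mp (hA hxA), hx⟩⟩)
  · intro h e he
    obtain ⟨heA, heG, x, hx, rfl⟩ := by simpa [edgesTo] using he
    exact h x hx ⟨heA, heG.ne⟩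

theorem kcomp_univ_sub_one (hA : A ⊆ G.edgeFinset) (j : V) :
    kcomp univ A - 1 = #{B ∈ (awayPartition (fromEdgeSet (A : Set (Sym2 V))) j).parts |
      A ∩ edgesTo G B j = ∅} := by
  classical
  rw [kcomp_univ, card_connectedComponent_eq_card_filter_awayPartition _ j, Nat.add_sub_cancel]
  congr! 2
  exact (inter_edgesTo_eq_empty_iff hA).symm

theorem subset_biUnion_edgesWithin_insert_iff (hA : A ⊆ G.edgeFinset)
    (π : Finpartition ((univ : Finset V).erase j)) :
    A ⊆ π.parts.biUnion (fun B ↦ edgesWithin G (insert j B)) ↔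
      ∀ x ≠ j, ∀ y ≠ j, (fromEdgeSet (A : Set (Sym2 V))).Adj x y →
        ∃ B ∈ π.parts, x ∈ B ∧ y ∈ B := by
  constructor
  · intro h x hx y hy hxy
    obtain ⟨B, hB, hxyB⟩ := mem_biUnion.mp (h hxy.1)
    obtain ⟨-, hxB, hyB⟩ := mk_mem_edgesWithin_iff.mp hxyB
    exact ⟨B, hB, mem_of_mem_insert_of_ne hxB hx, mem_of_mem_insert_of_ne hyB hy⟩
  · intro h e he
    induction e with | _ x y
    have hxy : G.Adj x y := mem_edgeFinset.mp (hA he)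
    have hpart {z : V} (hz : z ≠ j) : ∃ B ∈ π.parts, z ∈ B := π.exists_mem (by simpa using hz)
    suffices ∃ B ∈ π.parts, x ∈ insert j B ∧ y ∈ insert j B by
      simpa only [mem_biUnion, mk_mem_edgesWithin_iff, hxy, true_and] using this
    by_cases hx : x = j
    · obtain ⟨B, hB, hyB⟩ := hpart (hx ▸ hxy.ne')
      exact ⟨B, hB, hx ▸ mem_insert_self x B, mem_insert_of_mem hyB⟩
    by_cases hy : y = j
    · obtain ⟨B, hB, hxB⟩ := hpart hx
      exact ⟨B, hB, mem_insert_of_mem hxB, hy ▸ mem_insert_self y B⟩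
    obtain ⟨B, hB, hxB, hyB⟩ := h x hx y hy ⟨he, hxy.ne⟩
    exact ⟨B, hB, mem_insert_of_mem hxB, mem_insert_of_mem hyB⟩

theorem awayPartition_fromEdgeSet_eq_iff (hA : A ⊆ G.edgeFinset)
    {π : Finpartition ((univ : Finset V).erase j)} :
    awayPartition (fromEdgeSet (A : Set (Sym2 V))) j = π ↔
      A ⊆ π.parts.biUnion (fun B ↦ edgesWithin G (insert j B)) ∧
        ∀ B ∈ π.parts, kcomp B (A ∩ edgesWithin G B) = 1 := by
  simp only [awayPartition_eq_iff, subset_biUnion_edgesWithin_insert_iff hA,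
    kcomp_inter_edgesWithin hA, kcomp_eq_one_iff]

end EdgeSets

section Weights

variable {V : Type*} [Fintype V] [DecidableEq V] {R : Type*} [CommRing R]
  (G : SimpleGraph V) [DecidableRel G.Adj] (v : Sym2 V → R) (q : R)

theorem sum_block_weight {B : Finset V} {j : V} (hj : j ∉ B) :
    ∑ A ∈ (edgesWithin G (insert j B)).powerset with kcomp B (A ∩ edgesWithin G B) = 1,
        (if A ∩ edgesTo G B j = ∅ then q else 1) * ∏ e ∈ A, v e
      = (q - 1 + ∏ e ∈ edgesTo G B j, (1 + v e)) * Cmv G B v := by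
  rw [edgesWithin_insert, mul_comm, ← sum_powerset_ite_empty_mul_prod, Cmv, sum_filter, sum_filter,
    ← sum_powerset_union_mul (disjoint_edgesWithin_edgesTo hj)]
  refine sum_congr rfl fun A hA ↦ ?_
  have hprod : ∏ e ∈ A, v e
      = (∏ e ∈ A ∩ edgesWithin G B, v e) * ∏ e ∈ A ∩ edgesTo G B j, v e := by
    rw [← prod_union, ← inter_union_distrib_left, inter_eq_left.mpr (mem_powerset.mp hA)]
    exact (disjoint_edgesWithin_edgesTo hj).mono inter_subset_right inter_subset_right
  rw [hprod, mul_left_comm, ← ite_zero_mul]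

theorem pow_kcomp_mul_prod_eq_prod_parts {j : V} {A : Finset (Sym2 V)}
    {π : Finpartition ((univ : Finset V).erase j)}
    (hA : A ⊆ G.edgeFinset) (hπ : awayPartition (fromEdgeSet (A : Set (Sym2 V))) j = π) :
    q ^ (kcomp univ A - 1) * ∏ e ∈ A, v e
      = ∏ B ∈ π.parts, (if A ∩ edgesTo G B j = ∅ then q else 1) *
          ∏ e ∈ A ∩ edgesWithin G (insert j B), v e := by
  subst hπ
  have hcover := ((awayPartition_fromEdgeSet_eq_iff hA).mp (rfl : _ = awayPartition _ j)).1
  have hdisj := pairwiseDisjoint_edgesWithin_insert (G := G)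
    (awayPartition (fromEdgeSet (A : Set (Sym2 V))) j) j
  rw [prod_mul_distrib, kcomp_univ_sub_one hA j, ← prod_const, prod_filter, ← prod_biUnion,
    ← inter_biUnion, inter_eq_left.mpr hcover]
  exact fun B hB C hC hBC ↦ (hdisj hB hC hBC).mono inter_subset_right inter_subset_right

open Classical in
theorem sum_awayPartition_fiber {j : V} (π : Finpartition ((univ : Finset V).erase j)) :
    ∑ A ∈ G.edgeFinset.powerset with
        awayPartition (fromEdgeSet ((A : Finset (Sym2 V)) : Set (Sym2 V))) j = π,
        q ^ (kcomp univ A - 1) * ∏ e ∈ A, v e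
      = ∏ B ∈ π.parts, (q - 1 + ∏ e ∈ edgesTo G B j, (1 + v e)) * Cmv G B v := by
  have hsub : π.parts.biUnion (fun B ↦ edgesWithin G (insert j B)) ⊆ G.edgeFinset :=
    biUnion_subset.mpr fun _ _ ↦ filter_subset _ _
  have hinter (A : Finset (Sym2 V)) (B : Finset V) :
      A ∩ edgesWithin G (insert j B) ∩ edgesWithin G B = A ∩ edgesWithin G B := by
    rw [inter_assoc, edgesWithin_insert, union_inter_cancel_left]
  have hfiber (A : Finset (Sym2 V)) :
      A ⊆ G.edgeFinset ∧ awayPartition (fromEdgeSet (A : Set (Sym2 V))) j = π ↔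
        A ⊆ π.parts.biUnion (fun B ↦ edgesWithin G (insert j B)) ∧
          ∀ B ∈ π.parts, kcomp B (A ∩ edgesWithin G (insert j B) ∩ edgesWithin G B) = 1 := by
    simp only [hinter]
    exact ⟨fun ⟨hA, hπ⟩ ↦ (awayPartition_fromEdgeSet_eq_iff hA).mp hπ,
      fun h ↦ ⟨h.1.trans hsub, (awayPartition_fromEdgeSet_eq_iff (h.1.trans hsub)).mpr h⟩⟩
  rw [prod_congr rfl fun B hB ↦ (sum_block_weight G v q (notMem_of_mem_parts_erase hB)).symm,
    ← sum_powerset_biUnion_filter_prod (pairwiseDisjoint_edgesWithin_insert π j)]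
  refine sum_congr (by ext A; simpa only [mem_filter, mem_powerset] using hfiber A) fun A hA ↦ ?_
  simp only [mem_filter, mem_powerset] at hA
  obtain ⟨hAG, hAπ⟩ := (hfiber A).mpr hA
  rw [pow_kcomp_mul_prod_eq_prod_parts G v q hAG hAπ]
  refine prod_congr rfl fun B _ ↦ ?_
  rw [inter_assoc A _ (edgesTo G B j), edgesWithin_insert, union_inter_cancel_right]

end Weights

theorem stmt17 {V : Type*} [Fintype V] [DecidableEq V] {R : Type*} [CommRing R]
    (G : SimpleGraph V) [DecidableRel G.Adj] (v : Sym2 V → R) (q : R)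
    (hV : 2 ≤ Fintype.card V) (j : V) :
    ZhatMv G Finset.univ q v
      = ∑ π : Finpartition ((Finset.univ : Finset V).erase j),
          ∏ B ∈ π.parts,
            ((q - 1 + ∏ e ∈ edgesTo G B j, (1 + v e)) * Cmv G B v) := by
  classical
  rw [ZhatMv, edgesWithin_univ,
    ← sum_fiberwise _ fun A : Finset (Sym2 V) ↦ awayPartition (fromEdgeSet (A : Set (Sym2 V))) j]
  exact sum_congr rfl fun π _ ↦ sum_awayPartition_fiber G v q π
end

section
/- For n ≥ 1 let C_n(v) = Σ_{A} v^{|A|}, where the sum runs over all edge subsets A of the complete graph on vertex set {1,…,n} such that the spanning subgraph ({1,…,n}, A) is connected, and v is an element of a commutative ring R. Then for every n ≥ 2: C_n(v) = Σ_{k=1}^{n-1} binom(n-2, k-1) · [ (1+v)^k - 1 ] · C_k(v) · C_{n-k}(v). -/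
open Finset SimpleGraph

/-- `C_n(v) = Σ_A v^{|A|}`, the sum over edge subsets `A` of the complete graph on
`{1,…,n}` such that the spanning subgraph `({1,…,n}, A)` is connected. -/
noncomputable def Cn {R : Type*} [CommRing R] (n : ℕ) (v : R) : R :=
  ∑ A ∈ (⊤ : SimpleGraph (Fin n)).edgeFinset.powerset.filter
      (fun A : Finset (Sym2 (Fin n)) =>
        Nat.card (SimpleGraph.fromEdgeSet
          ((A : Finset (Sym2 (Fin n))) : Set (Sym2 (Fin n)))).ConnectedComponent = 1),
    v ^ A.card

/-!
Fix two vertices `a ≠ b`. In a connected graph `G`, let `S` be the vertex set of the component of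
`b` in `G - a`. Every edge leaving `S` ends at `a`, so `G` amounts to a connected graph on `S`, a
connected graph on the complement of `S`, and the nonempty set of neighbours of `a` in `S`.
The choices of the latter contribute `(1 + v) ^ |S| - 1`, and there are `(n - 2).choose (k - 1)`
sets `S` of size `k` that contain `b` but not `a`.
-/

lemma sum_powerset_mem_apply_card {ι M : Type*} [DecidableEq ι] [AddCommMonoid M] {U : Finset ι}
    {b : ι} (hb : b ∈ U) (f : ℕ → M) :
    ∑ S ∈ U.powerset with b ∈ S, f #S = ∑ k ∈ Icc 1 #U, (#U - 1).choose (k - 1) • f k := by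
  obtain ⟨T, hbT, rfl⟩ : ∃ T, b ∉ T ∧ insert b T = U :=
    ⟨U.erase b, notMem_erase b U, insert_erase hb⟩
  have h_notMem {S : Finset ι} (hS : S ∈ T.powerset) : b ∉ S := fun h ↦ hbT (mem_powerset.1 hS h)
  calc ∑ S ∈ (insert b T).powerset with b ∈ S, f #S
      = ∑ S ∈ T.powerset, f (#S + 1) := by
        rw [sum_filter, sum_powerset_insert hbT,
          sum_eq_zero fun S hS ↦ if_neg (h_notMem hS), zero_add]
        refine sum_congr rfl fun S hS ↦ ?_
        rw [if_pos (mem_insert_self b S), card_insert_of_notMem (h_notMem hS)]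
    _ = ∑ k ∈ range (#T + 1), (#T).choose k • f (k + 1) :=
        sum_powerset_apply_card (fun k ↦ f (k + 1))
    _ = ∑ k ∈ Icc 1 (#T + 1), (#T).choose (k - 1) • f k := by
        rw [range_eq_Ico, ← Ico_add_one_right_eq_Icc,
          ← sum_Ico_add' (fun k ↦ (#T).choose (k - 1) • f k) 0 (#T + 1) 1]
        rfl
    _ = _ := by rw [card_insert_of_notMem hbT, Nat.add_sub_cancel]

lemma sum_powerset_nonempty_pow_card {R ι : Type*} [CommRing R] (S : Finset ι) (v : R) :
    ∑ N ∈ S.powerset with N.Nonempty, v ^ #N = (1 + v) ^ #S - 1 := by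
  classical
  have hempty : {N ∈ S.powerset | N.Nonempty} = S.powerset.erase ∅ := by
    ext N
    simp [nonempty_iff_ne_empty, and_comm]
  have hbinom : ∑ N ∈ S.powerset, v ^ #N = (1 + v) ^ #S := by
    simpa [add_comm] using sum_pow_mul_eq_add_pow v 1 S
  rw [hempty, sum_erase_eq_sub (empty_mem_powerset S), hbinom, card_empty, pow_zero]

lemma card_connectedComponent_eq_one_iff {V : Type*} {G : SimpleGraph V} :
    Nat.card G.ConnectedComponent = 1 ↔ G.Connected := by
  rw [Nat.card_eq_one_iff_unique]
  constructor
  · rintro ⟨_, ⟨c⟩⟩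
    have : Nonempty V := ⟨c.out⟩
    exact ⟨fun x y ↦ ConnectedComponent.exact (Subsingleton.elim _ _)⟩
  · intro hG
    exact ⟨hG.preconnected.subsingleton_connectedComponent,
      hG.nonempty.map G.connectedComponentMk⟩

lemma edgeSet_fromEdgeSet_of_subset {V : Type*} {A : Set (Sym2 V)}
    (hA : A ⊆ (⊤ : SimpleGraph V).edgeSet) : (fromEdgeSet A).edgeSet = A := by
  rw [edgeSet_top] at hA
  rw [edgeSet_fromEdgeSet, (Set.disjoint_right.2 fun e he h ↦ hA h he).sdiff_eq_left]

section Branch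

variable {V : Type*} {G : SimpleGraph V} {S : Set V} {a b : V}

/-- The branch of `G` at `a` towards `b`: the vertex set of the component of `b` in the graph
obtained from `G` by deleting `a`. The deleted vertex is kept as an isolated vertex, so that the
branch is a set of vertices of `G`. -/
def branch (G : SimpleGraph V) (a b : V) : Set V :=
  ((G.deleteIncidenceSet a).connectedComponentMk b).supp

/-- The vertex set `S` is attached to the rest of `G` only at `a`: every edge leaving `S` ends
at `a`. -/
def IsAttachedAt (G : SimpleGraph V) (a : V) (S : Set V) : Prop :=
  ∀ ⦃x⦄, x ∈ S → ∀ ⦃y⦄, y ∉ S → G.Adj x y → y = a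

lemma mem_branch_self : b ∈ branch G a b := rfl

lemma notMem_branch (hab : a ≠ b) : a ∉ branch G a b := by
  intro h
  obtain ⟨p⟩ := ConnectedComponent.exact h
  cases p with
  | nil => exact hab rfl
  | cons h _ => exact (deleteIncidenceSet_adj.1 h).2.1 rfl

lemma isAttachedAt_branch (hab : a ≠ b) : IsAttachedAt G a (branch G a b) := by
  intro x hx y hy hxy
  by_contra hya
  have hxa : x ≠ a := ne_of_mem_of_not_mem hx (notMem_branch hab)
  exact hy (ConnectedComponent.mem_supp_of_adj_mem_supp _ hx
    (deleteIncidenceSet_adj.2 ⟨hxy, hxa, hya⟩))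

lemma connected_induce_branch : (G.induce (branch G a b)).Connected :=
  (ConnectedComponent.connected_toSimpleGraph _).mono
    (comap_monotone _ (G.deleteIncidenceSet_le a))

lemma IsAttachedAt.connected_induce_compl (hS : IsAttachedAt G a S) (ha : a ∉ S)
    (hG : G.Connected) : (G.induce Sᶜ).Connected := by
  have reachable_of_walk {x y : V} (p : G.Walk x y) (hy : y = a) (hx : x ∈ Sᶜ) :
      (G.induce Sᶜ).Reachable ⟨x, hx⟩ ⟨a, ha⟩ := by
    induction p with
    | nil => subst hy; rfl
    | @cons x z _ hxz _ ih =>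
      by_cases hz : z ∈ S
      · obtain rfl : x = a := hS hz hx hxz.symm
        rfl
      · exact (Adj.reachable (induce_adj.2 hxz)).trans (ih hy hz)
  rw [connected_iff_exists_forall_reachable]
  refine ⟨⟨a, ha⟩, fun ⟨x, hx⟩ ↦ ?_⟩
  obtain ⟨p⟩ := hG.preconnected x a
  exact (reachable_of_walk p rfl hx).symm

lemma IsAttachedAt.exists_adj (hS : IsAttachedAt G a S) (ha : a ∉ S) (hb : b ∈ S)
    (hG : G.Connected) : ∃ x ∈ S, G.Adj a x := by
  obtain ⟨p⟩ := hG.preconnected b a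
  obtain ⟨d, -, hfst, hsnd⟩ := p.exists_boundary_dart S hb ha
  exact ⟨d.fst, hfst, hS hfst hsnd d.adj ▸ d.adj.symm⟩

lemma IsAttachedAt.branch_eq (hS : IsAttachedAt G a S) (ha : a ∉ S) (hb : b ∈ S)
    (hconn : (G.induce S).Connected) : branch G a b = S := by
  refine subset_antisymm (fun x hx ↦ ?_) fun x hx ↦ ?_
  · by_contra hxS
    obtain ⟨p⟩ := (ConnectedComponent.exact hx).symm
    obtain ⟨d, -, hfst, hsnd⟩ := p.exists_boundary_dart S hb hxS
    obtain ⟨hadj, -, hne⟩ := deleteIncidenceSet_adj.1 d.adj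
    exact hne (hS hfst hsnd hadj)
  · rw [← induce_deleteIncidenceSet_of_notMem G ha] at hconn
    exact ConnectedComponent.sound
      ((hconn.preconnected ⟨x, hx⟩ ⟨b, hb⟩).map (Embedding.induce S).toHom)

theorem connected_and_branch_eq_iff (ha : a ∉ S) (hb : b ∈ S) :
    G.Connected ∧ branch G a b = S ↔
      IsAttachedAt G a S ∧ (∃ x ∈ S, G.Adj a x) ∧
        (G.induce S).Connected ∧ (G.induce Sᶜ).Connected := by
  constructor
  · rintro ⟨hG, rfl⟩
    have hS := isAttachedAt_branch (G := G) (ne_of_mem_of_not_mem hb ha).symm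
    exact ⟨hS, hS.exists_adj ha hb hG, connected_induce_branch, hS.connected_induce_compl ha hG⟩
  · rintro ⟨hS, ⟨x, hx, hax⟩, hconn, hconn_compl⟩
    refine ⟨?_, hS.branch_eq ha hb hconn⟩
    have hunion : (G.induce (S ∪ Sᶜ)).Connected :=
      connected_induce_union hconn.preconnected hconn_compl.preconnected hx ha hax.symm
    rw [Set.union_compl_self] at hunion
    exact (induceUnivIso G).connected_iff.1 hunion

end Branch

section Glue

variable {V : Type*} {S N : Set V} {a : V} {H : SimpleGraph S} {K : SimpleGraph ↥Sᶜ}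

lemma spanningCoe_adj {x y : V} :
    H.spanningCoe.Adj x y ↔ ∃ (hx : x ∈ S) (hy : y ∈ S), H.Adj ⟨x, hx⟩ ⟨y, hy⟩ := by
  simp only [map_adj, Function.Embedding.subtype_apply, Subtype.exists, exists_and_right,
    exists_eq_right_right, exists_eq_right]

/-- The star with centre `a` and set of leaves `N`, as a graph on all of `V`. It is meant for
`a ∉ N`; if `a ∈ N`, the loop at `a` is dropped. -/
def starOn (a : V) (N : Set V) : SimpleGraph V :=
  fromEdgeSet ((s(a, ·)) '' N)

lemma starOn_adj {x y : V} :
    (starOn a N).Adj x y ↔ (x = a ∧ y ∈ N ∨ y = a ∧ x ∈ N) ∧ x ≠ y := by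
  simp only [starOn, fromEdgeSet_adj, Set.mem_image, Sym2.eq_iff]
  grind

lemma ncard_edgeSet_starOn (ha : a ∉ N) : (starOn a N).edgeSet.ncard = N.ncard := by
  have hdiag : Disjoint ((s(a, ·)) '' N) Sym2.diagSet := by
    rw [Set.disjoint_left]
    rintro _ ⟨x, hx, rfl⟩ hax
    exact ne_of_mem_of_not_mem hx ha (Sym2.mk_isDiag_iff.1 hax).symm
  rw [starOn, edgeSet_fromEdgeSet, hdiag.sdiff_eq_left,
    Set.ncard_image_of_injective _ fun x y h ↦ Sym2.congr_right.1 h]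

/-- The graph obtained from a graph on `S` and a graph on its complement by joining `a` to every
vertex of `N`. It is meant for `a ∉ S` and `N ⊆ S`, when it is the general form of a graph in
which `S` is attached only at `a`. -/
def glue (a : V) (N : Set V) (H : SimpleGraph S) (K : SimpleGraph ↥Sᶜ) : SimpleGraph V :=
  H.spanningCoe ⊔ K.spanningCoe ⊔ starOn a N

lemma glue_adj {x y : V} : (glue a N H K).Adj x y ↔
    (∃ (hx : x ∈ S) (hy : y ∈ S), H.Adj ⟨x, hx⟩ ⟨y, hy⟩) ∨
    (∃ (hx : x ∉ S) (hy : y ∉ S), K.Adj ⟨x, hx⟩ ⟨y, hy⟩) ∨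
    (x = a ∧ y ∈ N ∨ y = a ∧ x ∈ N) ∧ x ≠ y := by
  simp only [glue, sup_adj, spanningCoe_adj, starOn_adj, or_assoc, Set.mem_compl_iff]

lemma isAttachedAt_glue (ha : a ∉ S) : IsAttachedAt (glue a N H K) a S := by
  intro x hx y hy
  rw [glue_adj]
  grind

lemma induce_glue (ha : a ∉ S) : (glue a N H K).induce S = H := by
  ext ⟨x, hx⟩ ⟨y, hy⟩
  simp only [comap_adj, Function.Embedding.subtype_apply, glue_adj]
  grind

lemma induce_compl_glue (hN : N ⊆ S) : (glue a N H K).induce Sᶜ = K := by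
  ext ⟨x, hx⟩ ⟨y, hy⟩
  simp only [comap_adj, Function.Embedding.subtype_apply, glue_adj]
  grind

lemma setOf_adj_glue (ha : a ∉ S) (hN : N ⊆ S) : {x ∈ S | (glue a N H K).Adj a x} = N := by
  ext x
  simp only [Set.mem_ofPred_eq, glue_adj]
  grind

lemma IsAttachedAt.glue_induce {G : SimpleGraph V} (hS : IsAttachedAt G a S) :
    glue a {x ∈ S | G.Adj a x} (G.induce S) (G.induce Sᶜ) = G := by
  ext x y
  simp only [glue_adj, comap_adj, Function.Embedding.subtype_apply, Set.mem_ofPred_eq]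
  have hSx := @hS x
  have hSy := @hS y
  grind [SimpleGraph.Adj.symm, SimpleGraph.Adj.ne]

lemma connected_glue_and_branch_glue_eq {b : V} (ha : a ∉ S) (hb : b ∈ S) (hNS : N ⊆ S)
    (hN : N.Nonempty) (hH : H.Connected) (hK : K.Connected) :
    (glue a N H K).Connected ∧ branch (glue a N H K) a b = S := by
  rw [connected_and_branch_eq_iff ha hb, induce_glue ha, induce_compl_glue hNS]
  rw [← setOf_adj_glue (H := H) (K := K) ha hNS] at hN
  exact ⟨isAttachedAt_glue ha, hN, hH, hK⟩

lemma ncard_edgeSet_spanningCoe : H.spanningCoe.edgeSet.ncard = H.edgeSet.ncard := by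
  rw [edgeSet_map, Set.ncard_image_of_injective _ (Function.Embedding.injective _)]

lemma ncard_edgeSet_glue [Finite V] (ha : a ∉ S) (hN : N ⊆ S) :
    (glue a N H K).edgeSet.ncard = H.edgeSet.ncard + K.edgeSet.ncard + N.ncard := by
  have hHK : Disjoint H.spanningCoe K.spanningCoe := by
    simp only [SimpleGraph.disjoint_left, spanningCoe_adj]
    grind
  have hstar : Disjoint (H.spanningCoe ⊔ K.spanningCoe) (starOn a N) := by
    simp only [SimpleGraph.disjoint_left, sup_adj, spanningCoe_adj, starOn_adj]
    grind
  rw [glue, edgeSet_sup, Set.ncard_union_eq (disjoint_edgeSet.2 hstar), edgeSet_sup,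
    Set.ncard_union_eq (disjoint_edgeSet.2 hHK), ncard_edgeSet_spanningCoe,
    ncard_edgeSet_spanningCoe, ncard_edgeSet_starOn fun h ↦ ha (hN h)]

end Glue

section ConnectedPoly

open Classical in
/-- The generating polynomial, by number of edges, of the connected graphs with vertex set `V`;
for `V = {1, …, n}` this is `C_n(v)`. -/
noncomputable def connectedPoly {R : Type*} [CommRing R] (V : Type*) [Fintype V] (v : R) : R :=
  ∑ G : SimpleGraph V with G.Connected, v ^ G.edgeSet.ncard

variable {R : Type*} [CommRing R] {V : Type*} [Fintype V]

lemma connectedPoly_congr {W : Type*} [Fintype W] (e : V ≃ W) (v : R) :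
    connectedPoly V v = connectedPoly W v := by
  classical
  have iso (G : SimpleGraph V) : e.simpleGraph G ≃g G := Iso.comap e.symm G
  refine Finset.sum_equiv e.simpleGraph (fun G ↦ ?_) fun G _ ↦ ?_
  · simp only [mem_filter, mem_univ, true_and, (iso G).connected_iff]
  · exact congrArg (v ^ ·) (Nat.card_congr (iso G).mapEdgeSet).symm

lemma Cn_eq_connectedPoly (n : ℕ) (v : R) : Cn n v = connectedPoly (Fin n) v := by
  classical
  have edgeSet_eq {A : Finset (Sym2 (Fin n))} (hA : A ⊆ (⊤ : SimpleGraph (Fin n)).edgeFinset) :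
      (fromEdgeSet (A : Set (Sym2 (Fin n)))).edgeSet = A :=
    edgeSet_fromEdgeSet_of_subset fun e he ↦ mem_edgeFinset.1 (hA he)
  simp only [Cn, connectedPoly, card_connectedComponent_eq_one_iff]
  refine Finset.sum_bij' (fun A _ ↦ fromEdgeSet (A : Set (Sym2 (Fin n))))
    (fun G _ ↦ G.edgeFinset) ?_ ?_ ?_ ?_ ?_
  · simp +contextual
  · intro G hG
    simpa only [mem_filter, mem_powerset, edgeFinset_mono le_top, true_and, coe_edgeFinset,
      fromEdgeSet_edgeSet, mem_univ] using hG
  · intro A hA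
    rw [← coe_inj, coe_edgeFinset, edgeSet_eq (mem_powerset.1 (mem_filter.1 hA).1)]
  · simp
  · intro A hA
    rw [edgeSet_eq (mem_powerset.1 (mem_filter.1 hA).1), Set.ncard_coe_finset]

lemma connectedPoly_eq_Cn_card (v : R) : connectedPoly V v = Cn (Nat.card V) v := by
  rw [Cn_eq_connectedPoly, connectedPoly_congr (Finite.equivFin V)]

open Classical in
lemma sum_connected_branch_eq {a b : V} {S : Finset V} (ha : a ∉ S) (hb : b ∈ S) (v : R) :
    ∑ G : SimpleGraph V with G.Connected ∧ branch G a b = S, v ^ G.edgeSet.ncard =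
      ((1 + v) ^ #S - 1) * connectedPoly (S : Set V) v * connectedPoly ↥(S : Set V)ᶜ v := by
  have ha' : a ∉ (S : Set V) := ha
  rw [← sum_powerset_nonempty_pow_card, connectedPoly, connectedPoly, sum_mul_sum,
    ← sum_product', sum_mul_sum, ← sum_product']
  symm
  refine Finset.sum_bij' (fun t _ ↦ glue a (t.1.1 : Set V) t.1.2 t.2)
    (fun G _ ↦ (({x ∈ S | G.Adj a x}, G.induce (S : Set V)), G.induce (S : Set V)ᶜ))
    ?_ ?_ ?_ ?_ ?_
  · rintro ⟨⟨N, H⟩, K⟩ h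
    simp only [mem_product, mem_filter, mem_univ, true_and, mem_powerset] at h ⊢
    obtain ⟨⟨⟨hNS, hN⟩, hH⟩, hK⟩ := h
    exact connected_glue_and_branch_glue_eq ha' hb (coe_subset.2 hNS) hN hH hK
  · intro G hG
    simp only [mem_product, mem_filter, mem_univ, true_and, mem_powerset] at hG ⊢
    obtain ⟨-, ⟨x, hx, hax⟩, hH, hK⟩ := (connected_and_branch_eq_iff ha' hb).1 hG
    exact ⟨⟨⟨filter_subset _ _, x, mem_filter.2 ⟨hx, hax⟩⟩, hH⟩, hK⟩
  · rintro ⟨⟨N, H⟩, K⟩ h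
    simp only [mem_product, mem_filter, mem_univ, true_and, mem_powerset] at h
    have hNS : (N : Set V) ⊆ S := coe_subset.2 h.1.1.1
    have hstar : {x ∈ S | (glue a N H K).Adj a x} = N := by
      rw [← coe_inj, coe_filter]
      exact setOf_adj_glue ha' hNS
    exact Prod.ext (Prod.ext hstar (induce_glue ha')) (induce_compl_glue hNS)
  · intro G hG
    have hS := ((connected_and_branch_eq_iff ha' hb).1 (mem_filter.1 hG).2).1
    rw [coe_filter]
    exact hS.glue_induce
  · rintro ⟨⟨N, H⟩, K⟩ h
    simp only [mem_product, mem_filter, mem_univ, true_and, mem_powerset] at h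
    rw [ncard_edgeSet_glue ha' (coe_subset.2 h.1.1.1), Set.ncard_coe_finset]
    ring

theorem connectedPoly_eq_sum [DecidableEq V] {a b : V} (hab : a ≠ b) (v : R) :
    connectedPoly V v = ∑ S ∈ (univ.erase a).powerset with b ∈ S,
      ((1 + v) ^ #S - 1) * connectedPoly (S : Set V) v * connectedPoly ↥(S : Set V)ᶜ v := by
  classical
  have branch_mem (G : SimpleGraph V) :
      (branch G a b).toFinset ∈ {S ∈ (univ.erase a).powerset | b ∈ S} := by
    simp [subset_erase, notMem_branch hab, mem_branch_self]
  rw [connectedPoly, ← sum_fiberwise_of_maps_to fun G _ ↦ branch_mem G]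
  refine sum_congr rfl fun S hS ↦ ?_
  obtain ⟨hSa, hb⟩ := mem_filter.1 hS
  have ha : a ∉ S := (subset_erase.1 (mem_powerset.1 hSa)).2
  simp only [filter_filter, ← coe_inj, Set.coe_toFinset]
  convert sum_connected_branch_eq ha hb v

end ConnectedPoly

theorem stmt19 {R : Type*} [CommRing R] (v : R) (n : ℕ) (hn : 2 ≤ n) :
    Cn n v
      = ∑ k ∈ Finset.Icc 1 (n - 1),
          ((n - 2).choose (k - 1) : R) * ((1 + v) ^ k - 1) * Cn k v * Cn (n - k) v := by
  let a : Fin n := ⟨0, by omega⟩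
  let b : Fin n := ⟨1, by omega⟩
  have hab : a ≠ b := by simp [a, b]
  have hb : b ∈ univ.erase a := mem_erase.2 ⟨hab.symm, mem_univ b⟩
  have hcard : #(univ.erase a) = n - 1 := by simp
  calc Cn n v
      = ∑ S ∈ (univ.erase a).powerset with b ∈ S,
          ((1 + v) ^ #S - 1) * Cn #S v * Cn (n - #S) v := by
        rw [Cn_eq_connectedPoly, connectedPoly_eq_sum hab]
        simp only [connectedPoly_eq_Cn_card, Nat.card_coe_set_eq, ← coe_compl,
          Set.ncard_coe_finset, card_compl, Fintype.card_fin]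
    _ = _ := by
        rw [sum_powerset_mem_apply_card hb fun k ↦ ((1 + v) ^ k - 1) * Cn k v * Cn (n - k) v, hcard]
        simp only [Nat.sub_sub, nsmul_eq_mul, mul_assoc]
end
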